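/- Let d ≥ 1, N ≥ 2, and let ψ_1, …, ψ_N be unit vectors in ℂ^d. Set σ_i := ψ_i ψ_i* (the rank-one orthogonal projection onto the span of ψ_i). Then 1 − P_succ((σ_i)_{i∈{1,…,N}}) ≥ (1/N)·(1 − √(1 − max_{i≠j} |⟨ψ_i, ψ_j⟩|²)). -/

import Mathlib

open Matrix
open scoped ComplexOrder

/-- Optimal single-copy success probability, with uniform priors, of discriminating
the states `(σ i)_{i ∈ T}`. -/
noncomputable def Psucc {d N : ℕ} (T : Finset (Fin N))
    (σ : Fin N → Matrix (Fin d) (Fin d) ℂ) : ℝ :=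
  sSup {x : ℝ | ∃ Λ : Fin N → Matrix (Fin d) (Fin d) ℂ,
    (∀ i ∈ T, (Λ i).PosSemidef) ∧ (∑ i ∈ T, Λ i) = (1 : Matrix (Fin d) (Fin d) ℂ) ∧
    x = ((T.card : ℝ))⁻¹ * ∑ i ∈ T, ((Λ i * σ i).trace).re}

/-!
Fix two of the states, `ρ` and `σ`. Any measurement errs on them at least as often as the
two-outcome test that announces `ρ` exactly when the measurement does, so its error probabilities on
all states sum to at least `1 - D`, where `D` bounds the advantage `Re Tr (E (ρ - σ))` of every test
`0 ≤ E ≤ 1`. For pure states with overlap `c`, Cauchy–Schwarz for the forms `E` and `1 - E` bounds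
`c` by the fidelity `√p √q + √(1 - p) √(1 - q)` of the acceptance probabilities `p`, `q`, which
forces `p - q ≤ √(1 - c²)`. The theorem is the case of a pair with maximal overlap.
-/

section Definitions

variable {n ι 𝕜 : Type*} [RCLike 𝕜]

/-- Density matrices, the states of a finite-dimensional quantum system. -/
structure IsDensityMatrix [Fintype n] (ρ : Matrix n n 𝕜) : Prop where
  posSemidef : ρ.PosSemidef
  trace_eq_one : ρ.trace = 1

/-- `(Λ i)_{i ∈ T}` is a positive operator-valued measure with outcomes in `T`; the values of `Λ`
outside `T` are irrelevant. -/
structure IsPOVM [DecidableEq n] (T : Finset ι) (Λ : ι → Matrix n n 𝕜) : Prop where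
  posSemidef : ∀ i ∈ T, (Λ i).PosSemidef
  sum_eq_one : ∑ i ∈ T, Λ i = 1

end Definitions

section QuadraticForms

variable {n 𝕜 : Type*} [Fintype n] [RCLike 𝕜]

theorem trace_mul_vecMulVec_star {R : Type*} [CommSemiring R] [Star R]
    (A : Matrix n n R) (v : n → R) :
    (A * vecMulVec v (star v)).trace = star v ⬝ᵥ (A *ᵥ v) := by
  rw [mul_vecMulVec, trace_vecMulVec, dotProduct_comm]

theorem dotProduct_one_sub_mulVec {R : Type*} [Ring R] [Star R] [DecidableEq n]
    (E : Matrix n n R) (x y : n → R) :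
    star x ⬝ᵥ ((1 - E) *ᵥ y) = star x ⬝ᵥ y - star x ⬝ᵥ (E *ᵥ y) := by
  rw [sub_mulVec, one_mulVec, dotProduct_sub]

theorem trace_mul_nonneg_of_posSemidef {A B : Matrix n n 𝕜} (hA : A.PosSemidef)
    (hB : B.PosSemidef) : 0 ≤ (A * B).trace := by
  obtain ⟨m, v, rfl⟩ := posSemidef_iff_eq_sum_vecMulVec.mp hB
  simp only [Matrix.mul_sum, trace_sum, trace_mul_vecMulVec_star]
  exact Finset.sum_nonneg fun i _ ↦ hA.dotProduct_mulVec_nonneg (v i)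

open scoped MatrixOrder in
theorem re_trace_mul_le_re_trace_mul {A B C : Matrix n n 𝕜} (hAB : A ≤ B) (hC : C.PosSemidef) :
    RCLike.re (A * C).trace ≤ RCLike.re (B * C).trace := by
  have h := (RCLike.nonneg_iff.mp (trace_mul_nonneg_of_posSemidef (le_iff.mp hAB) hC)).1
  rwa [sub_mul, trace_sub, map_sub, sub_nonneg] at h

theorem norm_dotProduct_mulVec_le_sqrt_mul_sqrt {A : Matrix n n 𝕜} (hA : A.PosSemidef)
    (x y : n → 𝕜) :
    ‖star x ⬝ᵥ (A *ᵥ y)‖ ≤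
      √(RCLike.re (star x ⬝ᵥ (A *ᵥ x))) * √(RCLike.re (star y ⬝ᵥ (A *ᵥ y))) := by
  let := A.toSeminormedAddCommGroup hA
  let := A.toInnerProductSpace hA
  have inner_eq (u v : n → 𝕜) : inner 𝕜 u v = star u ⬝ᵥ (A *ᵥ v) := dotProduct_comm _ _
  simpa only [norm_eq_sqrt_re_inner (𝕜 := 𝕜), inner_eq] using norm_inner_le_norm (𝕜 := 𝕜) x y

end QuadraticForms

section PureStates

variable {n 𝕜 : Type*} [Fintype n] [RCLike 𝕜]

theorem isDensityMatrix_vecMulVec_star {v : n → 𝕜} (hv : star v ⬝ᵥ v = 1) :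
    IsDensityMatrix (vecMulVec v (star v)) where
  posSemidef := posSemidef_vecMulVec_self_star v
  trace_eq_one := by rw [trace_vecMulVec, dotProduct_comm, hv]

theorem sq_fidelity_add_sq_sub_le_one {p q : ℝ} (hp : p ∈ Set.Icc 0 1) (hq : q ∈ Set.Icc 0 1) :
    (√p * √q + √(1 - p) * √(1 - q)) ^ 2 + (p - q) ^ 2 ≤ 1 := by
  have hp₁ := Real.sq_sqrt hp.1
  have hq₁ := Real.sq_sqrt hq.1
  have hp₂ := Real.sq_sqrt (sub_nonneg.mpr hp.2)
  have hq₂ := Real.sq_sqrt (sub_nonneg.mpr hq.2)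
  have amgm := two_mul_le_add_sq (√p * √(1 - p)) (√q * √(1 - q))
  simp only [mul_pow, hp₁, hq₁, hp₂, hq₂] at amgm
  calc (√p * √q + √(1 - p) * √(1 - q)) ^ 2 + (p - q) ^ 2
      = p * q + (1 - p) * (1 - q) + 2 * (√p * √(1 - p)) * (√q * √(1 - q)) + (p - q) ^ 2 := by
        rw [add_sq, mul_pow, mul_pow, hp₁, hq₁, hp₂, hq₂]
        ring
    _ ≤ p * q + (1 - p) * (1 - q) + (p * (1 - p) + q * (1 - q)) + (p - q) ^ 2 := by gcongr
    _ = 1 := by ring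

variable [DecidableEq n]

open scoped MatrixOrder

theorem re_dotProduct_mulVec_mem_Icc {E : Matrix n n 𝕜} (hE : E ∈ Set.Icc 0 1) {a : n → 𝕜}
    (ha : star a ⬝ᵥ a = 1) : RCLike.re (star a ⬝ᵥ (E *ᵥ a)) ∈ Set.Icc 0 1 := by
  refine ⟨hE.1.posSemidef.re_dotProduct_nonneg a, ?_⟩
  have h := (le_iff.mp hE.2).re_dotProduct_nonneg a
  rwa [dotProduct_one_sub_mulVec, ha, map_sub, RCLike.one_re, sub_nonneg] at h

theorem norm_dotProduct_le_fidelity {E : Matrix n n 𝕜} (hE : E ∈ Set.Icc 0 1) {a b : n → 𝕜}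
    (ha : star a ⬝ᵥ a = 1) (hb : star b ⬝ᵥ b = 1) :
    ‖star a ⬝ᵥ b‖ ≤
      √(RCLike.re (star a ⬝ᵥ (E *ᵥ a))) * √(RCLike.re (star b ⬝ᵥ (E *ᵥ b))) +
        √(1 - RCLike.re (star a ⬝ᵥ (E *ᵥ a))) * √(1 - RCLike.re (star b ⬝ᵥ (E *ᵥ b))) := by
  have accept := norm_dotProduct_mulVec_le_sqrt_mul_sqrt hE.1.posSemidef a b
  have reject := norm_dotProduct_mulVec_le_sqrt_mul_sqrt (le_iff.mp hE.2) a b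
  simp only [dotProduct_one_sub_mulVec, ha, hb, map_sub, RCLike.one_re] at reject
  calc ‖star a ⬝ᵥ b‖
      = ‖star a ⬝ᵥ (E *ᵥ b) + (star a ⬝ᵥ b - star a ⬝ᵥ (E *ᵥ b))‖ := by rw [add_sub_cancel]
    _ ≤ _ := norm_add_le_of_le accept reject

theorem re_trace_mul_sub_le_sqrt {E : Matrix n n 𝕜} (hE : E ∈ Set.Icc 0 1) {a b : n → 𝕜}
    (ha : star a ⬝ᵥ a = 1) (hb : star b ⬝ᵥ b = 1) :
    RCLike.re (E * (vecMulVec a (star a) - vecMulVec b (star b))).trace ≤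
      √(1 - ‖star a ⬝ᵥ b‖ ^ 2) := by
  rw [mul_sub, trace_sub, trace_mul_vecMulVec_star, trace_mul_vecMulVec_star, map_sub]
  have overlap := pow_le_pow_left₀ (norm_nonneg _) (norm_dotProduct_le_fidelity hE ha hb) 2
  have tradeoff := sq_fidelity_add_sq_sub_le_one
    (re_dotProduct_mulVec_mem_Icc hE ha) (re_dotProduct_mulVec_mem_Icc hE hb)
  exact Real.le_sqrt_of_sq_le (by linarith)

end PureStates

section Measurements

variable {n ι 𝕜 : Type*} [DecidableEq n] [RCLike 𝕜]

open scoped MatrixOrder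

namespace IsPOVM

variable {T : Finset ι} {Λ : ι → Matrix n n 𝕜}

theorem mem_Icc (hΛ : IsPOVM T Λ) {i : ι} (hi : i ∈ T) : Λ i ∈ Set.Icc 0 1 :=
  ⟨(hΛ.posSemidef i hi).nonneg,
    hΛ.sum_eq_one ▸ Finset.single_le_sum (fun k hk ↦ (hΛ.posSemidef k hk).nonneg) hi⟩

theorem le_one_sub (hΛ : IsPOVM T Λ) {i j : ι} (hi : i ∈ T) (hj : j ∈ T) (hij : i ≠ j) :
    Λ j ≤ 1 - Λ i := by
  rw [le_sub_iff_add_le', ← hΛ.sum_eq_one]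
  exact Finset.add_le_sum (fun k hk ↦ (hΛ.posSemidef k hk).nonneg) hi hj hij

variable [Fintype n]

theorem re_trace_mul_le_one (hΛ : IsPOVM T Λ) {i : ι} (hi : i ∈ T) {ρ : Matrix n n 𝕜}
    (hρ : IsDensityMatrix ρ) : RCLike.re (Λ i * ρ).trace ≤ 1 := by
  simpa [hρ.trace_eq_one] using re_trace_mul_le_re_trace_mul (hΛ.mem_Icc hi).2 hρ.posSemidef

theorem re_trace_add_re_trace_le (hΛ : IsPOVM T Λ) {i j : ι} (hi : i ∈ T) (hj : j ∈ T)
    (hij : i ≠ j) (ρ : Matrix n n 𝕜) {σ : Matrix n n 𝕜} (hσ : IsDensityMatrix σ) :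
    RCLike.re (Λ i * ρ).trace + RCLike.re (Λ j * σ).trace ≤
      1 + RCLike.re (Λ i * (ρ - σ)).trace := by
  have h := re_trace_mul_le_re_trace_mul (hΛ.le_one_sub hi hj hij) hσ.posSemidef
  simp only [sub_mul, one_mul, mul_sub, trace_sub, map_sub, hσ.trace_eq_one, RCLike.one_re] at h ⊢
  linarith

theorem sum_re_trace_le (hΛ : IsPOVM T Λ) {σ : ι → Matrix n n 𝕜}
    (hσ : ∀ k ∈ T, IsDensityMatrix (σ k)) {i j : ι} (hi : i ∈ T) (hj : j ∈ T) (hij : i ≠ j) :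
    ∑ k ∈ T, RCLike.re (Λ k * σ k).trace ≤
      T.card - (1 - RCLike.re (Λ i * (σ i - σ j)).trace) := by
  have errors_le := Finset.add_le_sum (f := fun k ↦ 1 - RCLike.re (Λ k * σ k).trace)
    (fun k hk ↦ sub_nonneg.mpr (hΛ.re_trace_mul_le_one hk (hσ k hk))) hi hj hij
  rw [Finset.sum_sub_distrib, Finset.sum_const, nsmul_one] at errors_le
  linarith [hΛ.re_trace_add_re_trace_le hi hj hij (σ i) (hσ j hj)]

end IsPOVM

theorem Psucc_le_of_forall_re_trace_le {d N : ℕ} {T : Finset (Fin N)}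
    {σ : Fin N → Matrix (Fin d) (Fin d) ℂ} (hσ : ∀ k ∈ T, IsDensityMatrix (σ k)) {i j : Fin N}
    (hi : i ∈ T) (hj : j ∈ T) (hij : i ≠ j) {D : ℝ}
    (hD : ∀ E ∈ Set.Icc 0 1, (E * (σ i - σ j)).trace.re ≤ D) :
    Psucc T σ ≤ 1 - 1 / (T.card : ℝ) * (1 - D) := by
  have card_pos : (1 : ℝ) ≤ T.card := by exact_mod_cast Finset.card_pos.mpr ⟨i, hi⟩
  have D_nonneg : 0 ≤ D := by simpa using hD 0 ⟨le_rfl, zero_le_one⟩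
  have bound_eq : 1 - 1 / (T.card : ℝ) * (1 - D) = (T.card : ℝ)⁻¹ * (T.card - (1 - D)) := by
    field_simp
  rw [bound_eq]
  refine Real.sSup_le ?_ (mul_nonneg (by positivity) (by linarith))
  rintro _ ⟨Λ, hpos, hsum, rfl⟩
  have hΛ : IsPOVM T Λ := ⟨hpos, hsum⟩
  gcongr
  exact (hΛ.sum_re_trace_le hσ hi hj hij).trans (by gcongr; exact hD _ (hΛ.mem_Icc hi))

end Measurements

theorem stmt_2_general {d N : ℕ} {T : Finset (Fin N)} {σ : Fin N → Matrix (Fin d) (Fin d) ℂ}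
    (hσ : ∀ k ∈ T, IsDensityMatrix (σ k)) {i j : Fin N} (hi : i ∈ T) (hj : j ∈ T) (hij : i ≠ j)
    {a b : Fin d → ℂ} (ha : σ i = vecMulVec a (star a)) (hb : σ j = vecMulVec b (star b)) :
    1 / (T.card : ℝ) * (1 - √(1 - ‖star a ⬝ᵥ b‖ ^ 2)) ≤ 1 - Psucc T σ := by
  have unit_a : star a ⬝ᵥ a = 1 := by
    rw [dotProduct_comm, ← trace_vecMulVec, ← ha, (hσ i hi).trace_eq_one]
  have unit_b : star b ⬝ᵥ b = 1 := by
    rw [dotProduct_comm, ← trace_vecMulVec, ← hb, (hσ j hj).trace_eq_one]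
  refine le_sub_comm.mp (Psucc_le_of_forall_re_trace_le hσ hi hj hij fun E hE ↦ ?_)
  rw [ha, hb]
  exact re_trace_mul_sub_le_sqrt hE unit_a unit_b

theorem stmt_2 {d N : ℕ} (hd : 1 ≤ d) (hN : 2 ≤ N)
    (ψ : Fin N → (Fin d → ℂ)) (hψ : ∀ i, star (ψ i) ⬝ᵥ ψ i = 1) :
    1 / (N : ℝ) *
        (1 - Real.sqrt (1 - ⨆ p : {p : Fin N × Fin N // p.1 ≠ p.2},
          ‖star (ψ p.1.1) ⬝ᵥ ψ p.1.2‖ ^ 2)) ≤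
      1 - Psucc Finset.univ (fun i => Matrix.vecMulVec (ψ i) (star (ψ i))) := by
  have : Nonempty {p : Fin N × Fin N // p.1 ≠ p.2} :=
    ⟨⟨(⟨0, by omega⟩, ⟨1, by omega⟩), by simp⟩⟩
  obtain ⟨⟨⟨i, j⟩, hij⟩, h_max⟩ := exists_eq_ciSup_of_finite
    (f := fun p : {p : Fin N × Fin N // p.1 ≠ p.2} ↦ ‖star (ψ p.1.1) ⬝ᵥ ψ p.1.2‖ ^ 2)
  rw [← h_max]
  simpa using stmt_2_general (fun k _ ↦ isDensityMatrix_vecMulVec_star (hψ k))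
    (Finset.mem_univ i) (Finset.mem_univ j) hij rfl rfl
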